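/- Let A and B be FDDS, let α be the number of unroll trees of 𝒰(B), and let n ≥ 2α + depth(B). Then 𝒰(A) = 𝒰(B) if and only if 𝒰(A)|_n = 𝒰(B)|_n. -/

import Mathlib

noncomputable section

/-- A rooted tree (finite or infinite), presented by its levels: `level n` is the
set of vertices of depth `n` (finitely many at each depth), every vertex of depth
`n+1` has a parent of depth `n` (edges are directed towards the root), and there
is a unique vertex of depth `0`, the root. -/
structure RTree : Type 1 where
  level : ℕ → Type
  parent : ∀ n, level (n + 1) → level n
  fin : ∀ n, Fintype (level n)
  root : level 0
  root_unique : ∀ x : level 0, x = root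

namespace RTree

/-- Isomorphism of rooted trees: a depth-preserving bijection of the vertices
commuting with the parent maps (hence root- and edge-preserving). -/
def Iso (t s : RTree) : Prop :=
  ∃ e : ∀ n, t.level n ≃ s.level n,
    ∀ (n : ℕ) (x : t.level (n + 1)), e n (t.parent n x) = s.parent n (e (n + 1) x)

/-- The (layer-by-layer direct) product of two rooted trees. -/
def tprod (t s : RTree) : RTree where
  level n := t.level n × s.level n
  parent n x := (t.parent n x.1, s.parent n x.2)
  fin n := by haveI := t.fin n; haveI := s.fin n; infer_instance
  root := (t.root, s.root)
  root_unique x := by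
    obtain ⟨a, b⟩ := x
    rw [t.root_unique a, s.root_unique b]

/-- The cut of a tree at depth `n`: the subtree induced on vertices of depth `≤ n`. -/
def tcut (t : RTree) (n : ℕ) : RTree where
  level k := PLift (k ≤ n) × t.level k
  parent k x := (⟨Nat.le_of_succ_le x.1.down⟩, t.parent k x.2)
  fin k := by
    haveI := t.fin k
    haveI : Finite (PLift (k ≤ n)) := Finite.of_subsingleton
    exact Fintype.ofFinite _
  root := (⟨Nat.zero_le n⟩, t.root)
  root_unique x := by
    obtain ⟨a, b⟩ := x
    rw [t.root_unique b]

/-- A tree is finite when it has no vertices below some depth. -/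
def IsFinite (t : RTree) : Prop := ∃ N, ∀ k, N ≤ k → IsEmpty (t.level k)

/-- The depth of a (finite) tree: the largest depth of one of its vertices. -/
def depth (t : RTree) : ℕ := sSup {n | Nonempty (t.level n)}

/-- `tpow t k` is the `k`-fold product `t^k` of the tree `t` with itself (for `k ≥ 1`). -/
def tpow (t : RTree) : ℕ → RTree
  | 0 => t
  | 1 => t
  | n + 2 => tprod t (tpow t (n + 1))

/-- Iterated parent map, sending a vertex of depth `k+1` to its ancestor of depth 1. -/
def down (t : RTree) : ∀ k, t.level (k + 1) → t.level 1
  | 0, x => x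
  | k + 1, x => t.down k (t.parent (k + 1) x)

/-- The subtree of `t` rooted at the depth-1 vertex `v` (a child of the root). -/
def subtreeAt (t : RTree) (v : t.level 1) : RTree where
  level k := { x : t.level (k + 1) // t.down k x = v }
  parent k x := ⟨t.parent (k + 1) x.1, x.2⟩
  fin k := by haveI := t.fin (k + 1); exact Fintype.ofFinite _
  root := ⟨v, rfl⟩
  root_unique x := Subtype.ext x.2

/-- `D t`: the forest (here, a list) of the subtrees of `t` rooted at the
children of the root. -/
def D (t : RTree) : List RTree := (@Finset.univ _ (t.fin 1)).toList.map t.subtreeAt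

end RTree

/-- A forest is a finite multiset of rooted trees; we represent it by a list of
(concrete) trees, equality of forests being `ForestEq` below. -/
abbrev Forest := List RTree

/-- Equality of forests as multisets of isomorphism classes of rooted trees. -/
def ForestEq (F G : Forest) : Prop := Multiset.Rel RTree.Iso (↑F) (↑G)

/-- `F` is a sub-multiset of `G` up to isomorphism of rooted trees. -/
def ForestLe (F G : Forest) : Prop :=
  ∃ H : Multiset RTree, H ≤ (↑G : Multiset RTree) ∧ Multiset.Rel RTree.Iso (↑F) H

/-- The product of two forests: the multiset of pairwise products. -/
def fprod (F G : Forest) : Forest := (F.map fun t => G.map fun s => t.tprod s).flatten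

/-- The cut of a forest at depth `n`. -/
def fcut (F : Forest) (n : ℕ) : Forest := F.map (RTree.tcut · n)

/-- The depth of a forest: maximum of the depths of its trees. -/
def fdepth (F : Forest) : ℕ := (F.map RTree.depth).foldr max 0

/-- `fpow F k` is the `k`-fold product `F^k` of the forest `F` with itself (for `k ≥ 1`). -/
def fpow (F : Forest) : ℕ → Forest
  | 0 => F
  | 1 => F
  | n + 2 => fprod F (fpow F (n + 1))

/-- `D` of a forest: the multiset union of the `D` of its trees. -/
def fD (F : Forest) : Forest := (F.map RTree.D).flatten

/-- `R F`: the rooted tree obtained by attaching each tree of the forest `F`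
as a child subtree of a new common root, so that `D (R F) = F`. -/
def rollRoot (F : Forest) : RTree where
  level k :=
    match k with
    | 0 => PUnit
    | k + 1 => Σ i : Fin F.length, (F.get i).level k
  parent k :=
    match k with
    | 0 => fun _ => PUnit.unit
    | k + 1 => fun x => ⟨x.1, (F.get x.1).parent k x.2⟩
  fin k := by
    match k with
    | 0 => exact inferInstanceAs (Fintype PUnit)
    | k + 1 =>
      haveI : ∀ i : Fin F.length, Fintype ((F.get i).level k) := fun i => (F.get i).fin k
      exact inferInstanceAs (Fintype (Σ i : Fin F.length, (F.get i).level k))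
  root := PUnit.unit
  root_unique _ := rfl

/-- The number of vertices of depth `d` in a forest. -/
def levelCard (F : Forest) (d : ℕ) : ℕ := (F.map fun t => @Fintype.card _ (t.fin d)).sum

/-- The total number of vertices of a (finite) forest. -/
def totalCard (F : Forest) : ℕ := ∑ d ∈ Finset.range (fdepth F + 1), levelCard F d

/-- A finite discrete-time dynamical system: a finite set of states together
with a transition function. -/
structure FDDS : Type 1 where
  S : Type
  fin : Fintype S
  f : S → S

namespace FDDS

/-- A state is periodic when some positive iterate of the transition function fixes it. -/
def Periodic (A : FDDS) (u : A.S) : Prop := ∃ p, 1 ≤ p ∧ A.f^[p] u = u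

/-- The least `k` such that `f^[k] s` is periodic. -/
def depthOf (A : FDDS) (s : A.S) : ℕ := sInf {k | A.Periodic (A.f^[k] s)}

/-- The depth of an FDDS: the maximum over states `s` of the least `k` such
that `f^[k] s` is periodic. -/
def depth (A : FDDS) : ℕ := sSup {d | ∃ s : A.S, d = A.depthOf s}

/-- The functional digraph of `A` has a single (weakly) connected component. -/
def Connected (A : FDDS) : Prop := ∀ s s' : A.S, ∃ k l, A.f^[k] s = A.f^[l] s'

/-- The unroll tree of `A` in the state `u`: vertices of depth `k` are the
`k`-th preimages of `u`, the parent of `(v,k+1)` being `(f v, k)`. -/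
def unrollTree (A : FDDS) (u : A.S) : RTree where
  level k := { s : A.S // A.f^[k] s = u }
  parent k x := ⟨A.f x.1, by rw [← Function.iterate_succ_apply]; exact x.2⟩
  fin k := by haveI := A.fin; exact Fintype.ofFinite _
  root := ⟨u, rfl⟩
  root_unique x := Subtype.ext x.2

/-- The unroll of `A`: the multiset of the unroll trees of `A` in its periodic states. -/
def unroll (A : FDDS) : Forest :=
  haveI := A.fin
  letI : DecidablePred A.Periodic := Classical.decPred _
  (Finset.univ.filter A.Periodic).toList.map A.unrollTree

/-- The minimal period of a periodic state. -/
def minPeriod (A : FDDS) (u : A.S) : ℕ := sInf {p | 1 ≤ p ∧ A.f^[p] u = u}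

/-- The periodic state `w` with `f^[i] w = u`: the `i`-th "shift" of `u`
backwards along its cycle. -/
def shiftState (A : FDDS) (u : A.S) (i : ℕ) : A.S := A.f^[i * (A.minPeriod u - 1)] u

/-- The shift `σ^i(t)` of the unroll tree `t = unrollTree A u`: the unroll tree
rooted at the depth-`i` vertex of the infinite branch of `t`. -/
def shiftTree (A : FDDS) (u : A.S) (i : ℕ) : RTree := A.unrollTree (A.shiftState u i)

/-- The unroll tree of `A` in `u` admits a periodic pattern of size `p ≥ 1`,
i.e. `σ^p(t_u) = t_u`. -/
def PatternSize (A : FDDS) (u : A.S) (p : ℕ) : Prop :=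
  1 ≤ p ∧ RTree.Iso (A.shiftTree u p) (A.unrollTree u)

/-- `|Shift(t_u)|`: the smallest size of a periodic pattern of the unroll tree of `A` in `u`. -/
def shiftCount (A : FDDS) (u : A.S) : ℕ := sInf {p | A.PatternSize u p}

end FDDS

/-- A rooted tree is an unroll tree when it is isomorphic to the unroll tree of
some FDDS in one of its periodic states. -/
def IsUnrollTree (x : RTree) : Prop :=
  ∃ (A : FDDS) (u : A.S), A.Periodic u ∧ RTree.Iso x (A.unrollTree u)

end

/-!
Two states have the same unroll tree as soon as some relation containing them can be matched along
preimages. In a system of depth at most `d`, a state with a `d`-th preimage is periodic, and a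
periodic state has exactly one periodic preimage. So an isomorphism of cuts of `t_u` and `t_v` that
still sees `d` levels must follow the two infinite branches, and the matching of `t_u` with `t_v` is
reduced to that of the cuts at depth `d + 1` of the trees hanging along these branches.
The cut at depth `n ≥ 2α + d` compares the first `2α` of them. Since both branches are
periodic with periods `p, q ≤ α`, agreement on the first `p + q` places forces agreement everywhere.
That `A`, like `B`, has depth at most `d` is itself read off the cuts: a tail of length greater
than `d` in `A` would give some periodic state a second preimage with a `d`-th preimage.
-/

section

open Function Set

variable {α β : Type*} {f : α → α} {g : β → β} {d m n : ℕ}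

/-! ### Matching preimages -/

/-- The relation lifting behind bisimulations of functional graphs: `a` and `b` are matched when
some bijection between their preimages respects `R`. -/
def FiberMatch (f : α → α) (g : β → β) (R : α → β → Prop) (a : α) (b : β) : Prop :=
  ∃ σ : f ⁻¹' {a} ≃ g ⁻¹' {b}, ∀ x : f ⁻¹' {a}, R x (σ x)

theorem FiberMatch.mono {R S : α → β → Prop} (h : R ≤ S) : FiberMatch f g R ≤ FiberMatch f g S :=
  fun _ _ ⟨σ, hσ⟩ ↦ ⟨σ, fun x ↦ h _ _ (hσ x)⟩

/-- The trees of iterated preimages of two states agree up to depth `n`; this is the equality of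
cuts, phrased on states instead of trees. -/
def CutEquiv (f : α → α) (g : β → β) : ℕ → α → β → Prop
  | 0 => ⊤
  | n + 1 => FiberMatch f g (CutEquiv f g n)

/-- The trees of iterated preimages of two states agree at all depths, in the coinductive form:
some relation between states contains the pair and lifts to preimages. -/
def Bisimilar (f : α → α) (g : β → β) (a : α) (b : β) : Prop :=
  ∃ R : α → β → Prop, R ≤ FiberMatch f g R ∧ R a b

namespace CutEquiv

theorem antitone (f : α → α) (g : β → β) : Antitone (CutEquiv f g) := by
  refine antitone_nat_of_succ_le fun n ↦ ?_
  induction n with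
  | zero => exact le_top
  | succ n ih => exact FiberMatch.mono ih

theorem zigzag {a a' : α} {b b' : β} (h₁ : CutEquiv f g n a b) (h₂ : CutEquiv f g n a' b)
    (h₃ : CutEquiv f g n a' b') : CutEquiv f g n a b' := by
  induction n generalizing a a' b b' with
  | zero => trivial
  | succ n ih =>
    obtain ⟨σ₁, hσ₁⟩ := h₁
    obtain ⟨σ₂, hσ₂⟩ := h₂
    obtain ⟨σ₃, hσ₃⟩ := h₃
    refine ⟨(σ₁.trans σ₂.symm).trans σ₃, fun x ↦ ih (hσ₁ x) ?_ (hσ₃ _)⟩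
    exact σ₂.apply_symm_apply (σ₁ x) ▸ hσ₂ (σ₂.symm (σ₁ x))

theorem mem_range_iterate {a : α} {b : β} (h : CutEquiv f g n a b) (ha : a ∈ range f^[n]) :
    b ∈ range g^[n] := by
  induction n generalizing a b with
  | zero => exact ⟨b, rfl⟩
  | succ n ih =>
    obtain ⟨σ, hσ⟩ := h
    obtain ⟨c, rfl⟩ := ha
    let x : f ⁻¹' {f^[n + 1] c} := ⟨f^[n] c, (iterate_succ_apply' f n c).symm⟩
    obtain ⟨c', hc'⟩ := ih (hσ x) ⟨c, rfl⟩
    exact ⟨c', by rw [iterate_succ_apply', hc']; exact (σ x).2⟩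

end CutEquiv

/-- The tree of iterated preimages of `a` has no vertex at some depth `m`, and it agrees with that
of `b` up to this depth; in particular both trees are finite and isomorphic. -/
def FiniteTreeEquiv (f : α → α) (g : β → β) (a : α) (b : β) : Prop :=
  ∃ m, CutEquiv f g m a b ∧ a ∉ range f^[m]

theorem finiteTreeEquiv_le_fiberMatch :
    FiniteTreeEquiv f g ≤ FiberMatch f g (FiniteTreeEquiv f g) := by
  rintro a b ⟨_ | m, h, ha⟩
  · exact absurd ⟨a, rfl⟩ ha
  · obtain ⟨σ, hσ⟩ := h
    refine ⟨σ, fun x ↦ ⟨m, hσ x, fun ⟨c, hc⟩ ↦ ha ⟨c, ?_⟩⟩⟩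
    rw [iterate_succ_apply', hc]
    exact x.2

/-! ### Periodic states -/

/-- The map going one step backwards along the cycles of `f`. -/
noncomputable def periodicPreimage (f : α → α) : periodicPts f → periodicPts f :=
  ((bijOn_periodicPts f).equiv f).symm

theorem apply_periodicPreimage (u : periodicPts f) : f (periodicPreimage f u) = u :=
  congrArg Subtype.val (((bijOn_periodicPts f).equiv f).apply_symm_apply u)

theorem periodicPreimage_injective (f : α → α) : Injective (periodicPreimage f) :=
  ((bijOn_periodicPts f).equiv f).symm.injective

theorem eq_periodicPreimage {u : periodicPts f} {a : α} (ha : a ∈ periodicPts f) (h : f a = u) :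
    a = periodicPreimage f u :=
  (bijOn_periodicPts f).injOn ha (periodicPreimage f u).2 (h.trans (apply_periodicPreimage u).symm)

theorem mem_range_iterate_of_mem_periodicPts {a : α} (ha : a ∈ periodicPts f) (n : ℕ) :
    a ∈ range f^[n] := by
  obtain ⟨c, -, hc⟩ := ((bijOn_periodicPts f).iterate n).surjOn ha
  exact ⟨c, hc⟩

theorem iterate_mem_periodicPts {a : α} (ha : a ∈ periodicPts f) (n : ℕ) :
    f^[n] a ∈ periodicPts f :=
  (bijOn_periodicPts f).mapsTo.iterate n ha

theorem exists_iterate_mem_periodicPts [Finite α] (f : α → α) (a : α) :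
    ∃ n, f^[n] a ∈ periodicPts f := by
  obtain ⟨i, j, hij, h⟩ := Finite.exists_ne_map_eq_of_infinite fun k ↦ f^[k] a
  wlog hlt : i < j generalizing i j
  · exact this j i hij.symm h.symm (by omega)
  refine ⟨i, mk_mem_periodicPts (Nat.sub_pos_of_lt hlt) ?_⟩
  rw [IsPeriodicPt, IsFixedPt, ← iterate_add_apply, Nat.sub_add_cancel hlt.le]
  exact h.symm

/-! ### Comparing the branches of two periodic states -/

theorem matching_eq_periodicPreimage (hg : range g^[d] ⊆ periodicPts g) {a : α}
    {v : periodicPts g} {σ : f ⁻¹' {a} ≃ g ⁻¹' {(v : β)}} {x : f ⁻¹' {a}}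
    (hσ : CutEquiv f g d x (σ x)) (hx : (x : α) ∈ range f^[d]) :
    (σ x : β) = periodicPreimage g v :=
  eq_periodicPreimage (hg (hσ.mem_range_iterate hx)) (σ x).2

theorem CutEquiv.iterate_periodicPreimage (hg : range g^[d] ⊆ periodicPts g) (hd : d ≤ m) (i : ℕ)
    {u : periodicPts f} {v : periodicPts g} (h : CutEquiv f g (m + i) u v) :
    CutEquiv f g m ((periodicPreimage f)^[i] u) ((periodicPreimage g)^[i] v) := by
  induction i generalizing u v with
  | zero => exact h
  | succ i ih =>
    obtain ⟨σ, hσ⟩ := h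
    let x : f ⁻¹' {(u : α)} := ⟨periodicPreimage f u, apply_periodicPreimage u⟩
    have hx : (σ x : β) = periodicPreimage g v :=
      matching_eq_periodicPreimage hg (antitone f g (hd.trans (Nat.le_add_right m i)) _ _ (hσ x))
        (mem_range_iterate_of_mem_periodicPts (periodicPreimage f u).2 d)
    exact ih (hx ▸ hσ x)

theorem range_iterate_subset_periodicPts_of_cutEquiv [Finite α] (hg : range g^[d] ⊆ periodicPts g)
    (h : ∀ u : periodicPts f, ∃ v : periodicPts g, CutEquiv f g (d + 1) u v) :
    range f^[d] ⊆ periodicPts f := by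
  have mem_of_apply_mem : ∀ a ∈ range f^[d], f a ∈ periodicPts f → a ∈ periodicPts f := by
    intro a ha hfa
    obtain ⟨v, σ, hσ⟩ := h ⟨f a, hfa⟩
    let w := periodicPreimage f ⟨f a, hfa⟩
    let x : f ⁻¹' {f a} := ⟨a, rfl⟩
    let y : f ⁻¹' {f a} := ⟨w, apply_periodicPreimage _⟩
    have hxy : σ x = σ y := Subtype.ext <|
      (matching_eq_periodicPreimage hg (hσ x) ha).trans
        (matching_eq_periodicPreimage hg (hσ y) (mem_range_iterate_of_mem_periodicPts w.2 d)).symm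
    have haw : a = w := congrArg Subtype.val (σ.injective hxy)
    exact haw ▸ w.2
  rintro a ha
  obtain ⟨n, hn⟩ := exists_iterate_mem_periodicPts f a
  induction n generalizing a with
  | zero => exact hn
  | succ n ih =>
    obtain ⟨c, rfl⟩ := ha
    refine mem_of_apply_mem _ ⟨c, rfl⟩ (ih ⟨f c, ?_⟩ hn)
    rw [← iterate_succ_apply, iterate_succ_apply']

theorem Bisimilar.of_forall_cutEquiv (hf : range f^[d] ⊆ periodicPts f)
    (hg : range g^[d] ⊆ periodicPts g) {u : periodicPts f} {v : periodicPts g}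
    (h : ∀ i, CutEquiv f g (d + 1) ((periodicPreimage f)^[i] u) ((periodicPreimage g)^[i] v)) :
    Bisimilar f g u v := by
  let onBranch : α → β → Prop := fun a b ↦
    ∃ i, a = (periodicPreimage f)^[i] u ∧ b = (periodicPreimage g)^[i] v
  refine ⟨onBranch ⊔ FiniteTreeEquiv f g, sup_le ?_ ?_, Or.inl ⟨0, rfl, rfl⟩⟩
  · rintro _ _ ⟨i, rfl, rfl⟩
    obtain ⟨σ, hσ⟩ := h i
    refine ⟨σ, fun x ↦ ?_⟩
    by_cases hx : (x : α) ∈ range f^[d]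
    · refine Or.inl ⟨i + 1, ?_, ?_⟩ <;> rw [iterate_succ_apply']
      · exact eq_periodicPreimage (hf hx) x.2
      · exact matching_eq_periodicPreimage hg (hσ x) hx
    · exact Or.inr ⟨d, hσ x, hx⟩
  · exact finiteTreeEquiv_le_fiberMatch.trans (FiberMatch.mono le_sup_right)

/-- A weak form of the Fine–Wilf theorem for a difunctional relation. -/
theorem forall_rel_of_lt_add_periods {R : α → β → Prop}
    (hR : ∀ {a a' b b'}, R a b → R a' b → R a' b' → R a b') {x : ℕ → α} {y : ℕ → β} {p q : ℕ}
    (hp : 0 < p) (hq : 0 < q) (hx : Periodic x p) (hy : Periodic y q)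
    (h : ∀ i < p + q, R (x i) (y i)) (i : ℕ) : R (x i) (y i) := by
  induction i using Nat.strong_induction_on with
  | _ i ih =>
    by_cases hi : i < p + q
    · exact h i hi
    · obtain ⟨j, rfl⟩ := Nat.exists_eq_add_of_le (not_lt.1 hi)
      have h₁ : R (x (j + q)) (y j) := hy j ▸ ih (j + q) (by omega)
      have h₂ : R (x j) (y j) := ih j (by omega)
      have h₃ : R (x j) (y (j + p)) := hx j ▸ ih (j + p) (by omega)
      have hxi : x (p + q + j) = x (j + q) := by
        rw [← hx (j + q)]
        congr 1
        omega
      have hyi : y (p + q + j) = y (j + p) := by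
        rw [← hy (j + p)]
        congr 1
        omega
      rw [hxi, hyi]
      exact hR h₁ h₂ h₃

theorem CutEquiv.bisimilar [Finite (periodicPts f)] [Finite (periodicPts g)]
    (hf : range f^[d] ⊆ periodicPts f) (hg : range g^[d] ⊆ periodicPts g)
    {u : periodicPts f} {v : periodicPts g}
    (hn : minimalPeriod (periodicPreimage f) u + minimalPeriod (periodicPreimage g) v + d ≤ n)
    (h : CutEquiv f g n u v) : Bisimilar f g u v := by
  have hu := (periodicPreimage_injective f).mem_periodicPts u
  have hv := (periodicPreimage_injective g).mem_periodicPts v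
  refine Bisimilar.of_forall_cutEquiv hf hg
    (forall_rel_of_lt_add_periods (R := fun (a : periodicPts f) (b : periodicPts g) ↦
        CutEquiv f g (d + 1) a b)
      zigzag (minimalPeriod_pos_of_mem_periodicPts hu) (minimalPeriod_pos_of_mem_periodicPts hv)
      (fun _ ↦ iterate_add_minimalPeriod_eq) (fun _ ↦ iterate_add_minimalPeriod_eq) fun i hi ↦ ?_)
  exact iterate_periodicPreimage hg d.le_succ i (antitone f g (by omega) _ _ h)

end

/-! ### Rooted trees and forests -/

namespace RTree

variable {t s : RTree}

/-- The children of the vertex `x`, as a subtype of the next level. -/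
def Children (t : RTree) {k : ℕ} (x : t.level k) : Type :=
  {y : t.level (k + 1) // t.parent k y = x}

theorem iso_of_children_matching (R : ∀ k, t.level k → s.level k → Prop) (h₀ : R 0 t.root s.root)
    (h : ∀ k x y, R k x y →
      ∃ σ : t.Children x ≃ s.Children y, ∀ z : t.Children x, R (k + 1) z.1 (σ z).1) :
    Iso t s := by
  let LevelEquiv (k : ℕ) := {e : t.level k ≃ s.level k // ∀ x, R k x (e x)}
  have extend (k : ℕ) (e : LevelEquiv k) :
      ∃ e' : LevelEquiv (k + 1), ∀ y, e.1 (t.parent k y) = s.parent k (e'.1 y) := by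
    choose σ hσ using fun x ↦ h k x (e.1 x) (e.2 x)
    let e' : t.level (k + 1) ≃ s.level (k + 1) :=
      (Equiv.sigmaFiberEquiv (t.parent k)).symm.trans <|
        (Equiv.sigmaCongr e.1 σ).trans (Equiv.sigmaFiberEquiv (s.parent k))
    exact ⟨⟨e', fun y ↦ hσ (t.parent k y) ⟨y, rfl⟩⟩,
      fun y ↦ (σ (t.parent k y) ⟨y, rfl⟩).2.symm⟩
  choose succEquiv hsucc using extend
  have := (⟨⟨t.root⟩, t.root_unique⟩ : Unique (t.level 0))
  have := (⟨⟨s.root⟩, s.root_unique⟩ : Unique (s.level 0))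
  let rootEquiv : LevelEquiv 0 := ⟨Equiv.ofUnique _ _, fun x ↦ by
    rw [t.root_unique x, s.root_unique (Equiv.ofUnique _ _ _)]
    exact h₀⟩
  let e : ∀ k, LevelEquiv k := fun k ↦ Nat.rec rootEquiv succEquiv k
  exact ⟨fun k ↦ (e k).1, fun k ↦ hsucc k (e k)⟩

theorem Iso.tcut (h : Iso t s) (n : ℕ) : Iso (t.tcut n) (s.tcut n) := by
  obtain ⟨e, he⟩ := h
  exact ⟨fun k ↦ (Equiv.refl _).prodCongr (e k),
    fun k x ↦ Prod.ext (Subsingleton.elim _ _) (he k x.2)⟩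

/-- Above the cutting depth, cutting a tree does not change the children of a vertex. -/
def tcutChildrenEquiv (t : RTree) {n k : ℕ} (hk : k < n) (x : (t.tcut n).level k) :
    (t.tcut n).Children x ≃ t.Children x.2 where
  toFun y := ⟨y.1.2, congrArg Prod.snd y.2⟩
  invFun y := ⟨(⟨hk⟩, y.1), Prod.ext (Subsingleton.elim _ _) y.2⟩
  left_inv _ := rfl
  right_inv _ := rfl

end RTree

theorem ForestEq.fcut {F G : Forest} (h : ForestEq F G) (n : ℕ) :
    ForestEq (fcut F n) (fcut G n) := by
  rw [ForestEq, _root_.fcut, _root_.fcut, ← Multiset.map_coe, ← Multiset.map_coe,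
    Multiset.rel_map]
  exact h.mono fun _ _ _ _ hts ↦ hts.tcut n

/-! ### Unrolls -/

namespace FDDS

open Function

variable {A B : FDDS}

instance (A : FDDS) : Finite A.S :=
  @Finite.of_fintype _ A.fin

noncomputable instance (A : FDDS) : Fintype (periodicPts A.f) :=
  Fintype.ofFinite _

/-- The children of a vertex `(s, k)` of an unroll tree are the preimages of the state `s`. -/
def unrollTreeChildrenEquiv (A : FDDS) (u : A.S) {k : ℕ} (x : (A.unrollTree u).level k) :
    (A.unrollTree u).Children x ≃ A.f ⁻¹' {x.1} where
  toFun y := ⟨y.1.1, congrArg Subtype.val y.2⟩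
  invFun s := ⟨⟨s.1, by rw [iterate_succ_apply, show A.f s = x.1 from s.2]; exact x.2⟩,
    Subtype.ext s.2⟩
  left_inv _ := rfl
  right_inv _ := rfl

theorem cutEquiv_of_iso_tcut {n : ℕ} {u : A.S} {v : B.S}
    (h : RTree.Iso ((A.unrollTree u).tcut n) ((B.unrollTree v).tcut n)) :
    CutEquiv A.f B.f n u v := by
  obtain ⟨e, he⟩ := h
  have cutEquiv_vertex (m k : ℕ) (hk : k + m = n) (x : ((A.unrollTree u).tcut n).level k) :
      CutEquiv A.f B.f m x.2.1 (e k x).2.1 := by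
    induction m generalizing k with
    | zero => trivial
    | succ m ih =>
      have hkn : k < n := by omega
      let toStates (A : FDDS) (u : A.S) (x : ((A.unrollTree u).tcut n).level k) :
          ((A.unrollTree u).tcut n).Children x ≃ A.f ⁻¹' {x.2.1} :=
        (RTree.tcutChildrenEquiv _ hkn x).trans (A.unrollTreeChildrenEquiv u x.2)
      let σ : ((A.unrollTree u).tcut n).Children x ≃ ((B.unrollTree v).tcut n).Children (e k x) :=
        (e (k + 1)).subtypeEquiv fun y ↦ by rw [← he, (e k).apply_eq_iff_eq]
      exact ⟨(toStates A u x).symm.trans (σ.trans (toStates B v (e k x))),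
        fun y ↦ ih (k + 1) (by omega) ((toStates A u x).symm y).1⟩
  have hroot := cutEquiv_vertex n 0 (Nat.zero_add n) ((A.unrollTree u).tcut n).root
  rwa [((B.unrollTree v).tcut n).root_unique (e 0 _)] at hroot

theorem iso_unrollTree_of_bisimilar {u : A.S} {v : B.S} (h : Bisimilar A.f B.f u v) :
    RTree.Iso (A.unrollTree u) (B.unrollTree v) := by
  obtain ⟨R, hR, huv⟩ := h
  refine RTree.iso_of_children_matching (fun _ x y ↦ R x.1 y.1) huv fun k x y hxy ↦ ?_
  obtain ⟨σ, hσ⟩ := hR _ _ hxy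
  exact ⟨(A.unrollTreeChildrenEquiv u x).trans
    (σ.trans (B.unrollTreeChildrenEquiv v y).symm), fun z ↦ hσ (A.unrollTreeChildrenEquiv u x z)⟩

theorem range_iterate_depth_subset_periodicPts (A : FDDS) :
    Set.range A.f^[A.depth] ⊆ periodicPts A.f := by
  rintro _ ⟨s, rfl⟩
  have hs : A.f^[A.depthOf s] s ∈ periodicPts A.f :=
    Nat.sInf_mem (exists_iterate_mem_periodicPts A.f s)
  have hle : A.depthOf s ≤ A.depth :=
    le_csSup ((Set.finite_range A.depthOf).subset fun _ hd ↦ hd.imp fun _ ↦ Eq.symm).bddAbove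
      ⟨s, rfl⟩
  rw [← Nat.sub_add_cancel hle, iterate_add_apply]
  exact iterate_mem_periodicPts hs _

theorem periodic_iff_mem_periodicPts {s : A.S} : A.Periodic s ↔ s ∈ periodicPts A.f :=
  Iff.rfl

theorem coe_unroll (A : FDDS) :
    (A.unroll : Multiset RTree) =
      Finset.univ.val.map fun u : periodicPts A.f ↦ A.unrollTree u := by
  classical
  let := A.fin
  have hval : Finset.univ.filter A.Periodic =
      (Finset.univ : Finset (periodicPts A.f)).map (Embedding.subtype _) := by
    ext s
    simp [periodic_iff_mem_periodicPts]
  rw [unroll, ← Multiset.map_coe, Finset.coe_toList]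
  convert congrArg (fun s : Finset A.S ↦ s.val.map A.unrollTree) hval using 1
  rw [Finset.map_val, Multiset.map_map]
  rfl

theorem length_unroll (A : FDDS) : A.unroll.length = Fintype.card (periodicPts A.f) := by
  rw [← Multiset.coe_card, coe_unroll, Multiset.card_map]
  rfl

theorem minimalPeriod_periodicPreimage_le (u : periodicPts A.f) :
    minimalPeriod (periodicPreimage A.f) u ≤ A.unroll.length :=
  minimalPeriod_le_card.trans_eq A.length_unroll.symm

theorem length_unroll_pos (u : periodicPts A.f) : 0 < A.unroll.length :=
  A.length_unroll ▸ Fintype.card_pos_iff.2 ⟨u⟩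

theorem forestEq_unroll_iff :
    ForestEq A.unroll B.unroll ↔
      Multiset.Rel (fun (u : periodicPts A.f) (v : periodicPts B.f) ↦
        RTree.Iso (A.unrollTree u) (B.unrollTree v)) Finset.univ.val Finset.univ.val := by
  rw [ForestEq, coe_unroll, coe_unroll, Multiset.rel_map]

theorem forestEq_fcut_unroll_iff {n : ℕ} :
    ForestEq (fcut A.unroll n) (fcut B.unroll n) ↔
      Multiset.Rel (fun (u : periodicPts A.f) (v : periodicPts B.f) ↦
        RTree.Iso ((A.unrollTree u).tcut n) ((B.unrollTree v).tcut n))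
        Finset.univ.val Finset.univ.val := by
  rw [ForestEq, fcut, fcut, ← Multiset.map_coe, ← Multiset.map_coe, coe_unroll, coe_unroll,
    Multiset.map_map, Multiset.map_map, Multiset.rel_map]
  rfl

end FDDS

/-- Let `A` and `B` be FDDS, `α` the number of unroll trees of `𝒰(B)`,
and `n ≥ 2α + depth B`. Then `𝒰(A) = 𝒰(B)` iff `𝒰(A)|_n = 𝒰(B)|_n`. -/
theorem stmt7 (A B : FDDS) (n : ℕ)
    (hn : 2 * (FDDS.unroll B).length + B.depth ≤ n) :
    ForestEq (FDDS.unroll A) (FDDS.unroll B) ↔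
      ForestEq (fcut (FDDS.unroll A) n) (fcut (FDDS.unroll B) n) := by
  refine ⟨fun h ↦ h.fcut n, fun h ↦ ?_⟩
  have hlen : A.unroll.length = B.unroll.length := by
    simpa [fcut] using Multiset.card_eq_card_of_rel h
  have hcut := (FDDS.forestEq_fcut_unroll_iff.1 h).mono fun _ _ _ _ ↦ FDDS.cutEquiv_of_iso_tcut
  have hB := B.range_iterate_depth_subset_periodicPts
  have hA : Set.range A.f^[B.depth] ⊆ Function.periodicPts A.f := by
    refine range_iterate_subset_periodicPts_of_cutEquiv hB fun u ↦ ?_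
    obtain ⟨v, -, huv⟩ := Multiset.exists_mem_of_rel_of_mem hcut (Finset.mem_univ u)
    have hpos := FDDS.length_unroll_pos v
    exact ⟨v, CutEquiv.antitone A.f B.f (by omega) _ _ huv⟩
  refine FDDS.forestEq_unroll_iff.2 (hcut.mono fun u _ v _ huv ↦
    FDDS.iso_unrollTree_of_bisimilar (huv.bisimilar hA hB ?_))
  have hu := FDDS.minimalPeriod_periodicPreimage_le u
  have hv := FDDS.minimalPeriod_periodicPreimage_le v
  omega
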